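/- Let G be the parallel composition of r ≥ 2 paths whose lengths have mixed parities (at least one path of odd length and at least one path of even length), and let X be the projective toric subset parameterized by G. Let H_1 be the parallel composition of those paths of odd length and H_2 the parallel composition of those paths of even length. Then reg(G) = reg(H_1) + reg(H_2) + (q−2). -/

import Mathlib

open MvPolynomial

/-- A finite multigraph without loops: each edge `e` has two distinct endpoints
`fst e` and `snd e`.  Multiple edges with the same endpoints are allowed. -/
structure Multigraph (V E : Type) : Type where
  fst : E → V
  snd : E → V
  ne : ∀ e, fst e ≠ snd e

namespace Multigraph

variable {V E : Type}

/-- Vertex `v` is an endpoint of the edge `e`. -/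
def Incident (G : Multigraph V E) (v : V) (e : E) : Prop :=
  G.fst e = v ∨ G.snd e = v

instance (G : Multigraph V E) [DecidableEq V] (v : V) : DecidablePred (G.Incident v) :=
  fun e => inferInstanceAs (Decidable (G.fst e = v ∨ G.snd e = v))

/-- The degree of a vertex: the number of edges incident to it. -/
noncomputable def degree (G : Multigraph V E) (v : V) : ℕ :=
  Nat.card {e : E // G.Incident v e}

/-- The graph has no isolated vertices. -/
def NoIsolated (G : Multigraph V E) : Prop :=
  ∀ v : V, ∃ e : E, G.Incident v e

variable (K : Type) [Field K] [Fintype K]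

/-- The point of the affine torus associated with an assignment `x` of nonzero
scalars to the vertices: its coordinate at an edge `e = {v,w}` is `x v * x w`. -/
def point (G : Multigraph V E) (x : V → Kˣ) : E → K :=
  fun e => (x (G.fst e) : K) * (x (G.snd e) : K)

/-- The projective toric subset `X` parameterized by `G`, realized as the set of
`Kˣ`-orbits (i.e. projective points) of the points `G.point K x`, `x : V → Kˣ`. -/
def toricSet (G : Multigraph V E) : Set (Set (E → K)) :=
  Set.range fun x : V → Kˣ => MulAction.orbit Kˣ (G.point K x)

/-- The vanishing ideal `I(X)` of the projective toric subset parameterized by `G`: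
the ideal of all polynomials each of whose homogeneous components vanishes at the
point `G.point K x` for every `x : V → Kˣ`. -/
def vanishingIdeal (G : Multigraph V E) : Ideal (MvPolynomial E K) where
  carrier := {f | ∀ (x : V → Kˣ) (d : ℕ), eval (G.point K x) (homogeneousComponent d f) = 0}
  zero_mem' := by intro x d; simp
  add_mem' := by
    intro a b ha hb x d
    rw [map_add, map_add, ha x d, hb x d, add_zero]
  smul_mem' := by
    intro c f hf x n
    rw [smul_eq_mul, ← sum_homogeneousComponent f, Finset.mul_sum, map_sum, map_sum]
    refine Finset.sum_eq_zero fun d _ => ?_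
    nth_rewrite 1 [← sum_homogeneousComponent c]
    rw [Finset.sum_mul, map_sum, map_sum]
    refine Finset.sum_eq_zero fun e _ => ?_
    have h1 : (homogeneousComponent e c * homogeneousComponent d f).IsHomogeneous (e + d) :=
      (homogeneousComponent_isHomogeneous e c).mul (homogeneousComponent_isHomogeneous d f)
    rw [homogeneousComponent_of_mem ((mem_homogeneousSubmodule _ _).mpr h1)]
    split_ifs
    · rw [map_mul, hf x d, mul_zero]
    · simp

/-- The Hilbert function of `S/I(X)`: the dimension over `K` of the degree-`d`
homogeneous component of the quotient, realized as the image of the space of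
degree-`d` homogeneous polynomials in the quotient. -/
noncomputable def hilbert (G : Multigraph V E) (d : ℕ) : ℕ :=
  Module.finrank K
    ((homogeneousSubmodule E K d).map (Ideal.Quotient.mkₐ K (G.vanishingIdeal K)).toLinearMap)

/-- The regularity `reg G`: the least `d` such that the Hilbert function of `S/I(X)`
at `d` equals the number of points of `X`. -/
noncomputable def reg (G : Multigraph V E) : ℕ :=
  sInf {d : ℕ | G.hilbert K d = (G.toricSet K).ncard}

/-- The graph obtained from `G` by deleting a vertex `v` and all edges incident
to it. -/
def deleteVert (G : Multigraph V E) (v : V) :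
    Multigraph {w : V // w ≠ v} {e : E // ¬ G.Incident v e} where
  fst e := ⟨G.fst e.1, fun h => e.2 (Or.inl h)⟩
  snd e := ⟨G.snd e.1, fun h => e.2 (Or.inr h)⟩
  ne e h := G.ne e.1 (congrArg Subtype.val h)

/-- The graph obtained from `G` by identifying the vertex `v₂` with the vertex `v₁`:
the edges are the same, and every endpoint equal to `v₂` is replaced by `v₁`.
This requires that `{v₁, v₂}` is a non-edge of `G`, so that no loops are created. -/
def identifyVert [DecidableEq V] (G : Multigraph V E) (v₁ v₂ : V) (h12 : v₁ ≠ v₂)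
    (h : ∀ e, ¬ (G.Incident v₁ e ∧ G.Incident v₂ e)) :
    Multigraph {w : V // w ≠ v₂} E where
  fst e := ⟨if G.fst e = v₂ then v₁ else G.fst e, by split_ifs with hh; exacts [h12, hh]⟩
  snd e := ⟨if G.snd e = v₂ then v₁ else G.snd e, by split_ifs with hh; exacts [h12, hh]⟩
  ne := by
    intro e heq
    rw [Subtype.ext_iff] at heq
    simp only at heq
    split_ifs at heq with h1 h2 h2
    · exact G.ne e (h1.trans h2.symm)
    · exact h e ⟨Or.inr heq.symm, Or.inl h1⟩
    · exact h e ⟨Or.inl heq, Or.inr h2⟩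
    · exact G.ne e heq

/-- The subgraph of `G` determined by a set `A` of edges of `G`, together with all
endpoints of those edges (so it has no isolated vertices). -/
def subgraph [DecidableEq V] (G : Multigraph V E) (A : Finset E) :
    Multigraph {v : V // ∃ e ∈ A, G.Incident v e} {e : E // e ∈ A} where
  fst e := ⟨G.fst e.1, e.1, e.2, Or.inl rfl⟩
  snd e := ⟨G.snd e.1, e.1, e.2, Or.inr rfl⟩
  ne e h := G.ne e.1 (congrArg Subtype.val h)

end Multigraph

/-- The vertex of the parallel composition of paths of lengths `k i` lying on the
`i`-th path at distance `j` from the common initial vertex:  `j = 0` gives the common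
initial vertex, `j = k i` the common terminal vertex, and `0 < j < k i` gives the
`j`-th interior vertex of the `i`-th path. -/
def pcVert {ι : Type} (k : ι → ℕ) (i : ι) (j : ℕ) :
    Bool ⊕ ((i : ι) × Fin (k i - 1)) :=
  if h0 : j = 0 then Sum.inl false
  else if h : j < k i then Sum.inr ⟨i, ⟨j - 1, by omega⟩⟩
  else Sum.inl true

/-- The parallel composition of the family of paths `P i` of lengths `k i` (`i : ι`):
the `i`-th path has `k i` edges indexed by `Fin (k i)`, its `j`-th edge joining the
vertices of the `i`-th path at distances `j` and `j + 1` from the common initial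
vertex.  All the initial vertices of the paths are identified to a single vertex and
all the terminal vertices are identified to a single vertex. -/
def parallelComp {ι : Type} (k : ι → ℕ) :
    Multigraph (Bool ⊕ ((i : ι) × Fin (k i - 1))) ((i : ι) × Fin (k i)) where
  fst e := pcVert k e.1 e.2.1
  snd e := pcVert k e.1 (e.2.1 + 1)
  ne := by
    rintro ⟨i, j⟩ h
    have hj := j.2
    simp only [pcVert] at h
    split_ifs at h <;> simp_all <;> omega

/-- The monomial `f i`: the product of the edges of the `i`-th path of the parallel
composition in odd positions (positions `1, 3, 5, ...`, i.e. indices `0, 2, 4, ...`). -/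
noncomputable def oddProd {ι : Type} (K : Type) [Field K] (k : ι → ℕ) (i : ι) :
    MvPolynomial ((i : ι) × Fin (k i)) K :=
  ∏ m : Fin ((k i + 1) / 2), X ⟨i, ⟨2 * m.1, by have := m.2; omega⟩⟩

/-- The monomial `g i`: the product of the edges of the `i`-th path of the parallel
composition in even positions (positions `2, 4, 6, ...`, i.e. indices `1, 3, 5, ...`). -/
noncomputable def evenProd {ι : Type} (K : Type) [Field K] (k : ι → ℕ) (i : ι) :
    MvPolynomial ((i : ι) × Fin (k i)) K :=
  ∏ m : Fin (k i / 2), X ⟨i, ⟨2 * m.1 + 1, by have := m.2; omega⟩⟩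

/-!
Let `q = |K|`, and let `C ≤ (Kˣ)^E` be the cone over `X`: the group of all nonzero multiples of its
points. By Dedekind's independence of characters, the Hilbert function in degree `d` counts the
characters of `C` that are given by a monomial of degree `d`. Scalars belong to `C`, so the degree
of such a monomial is determined modulo `q - 1` by the character, and it can be raised by any
multiple of `q - 1`. Consequently, if `M` is the largest degree needed to represent a character of
`C`, each in its least degree, then `reg G = M - (q - 2)`.

For a parallel composition of paths of mixed parities, rescaling the vertices of a path alternately
by `c` and `d` shows that the cone of `G` is the product of the cones of `H₁` and `H₂`: an odd path
fixes only `u s t` and an even path only `s / t`, where `u` is the scalar and `s`, `t` are the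
values at the two common vertices. Hence `M` is additive.
-/

section Characters

theorem finrank_map_eq_of_apply_eq_zero_iff {R M N N' : Type*} [Ring R] [AddCommGroup M]
    [AddCommGroup N] [AddCommGroup N'] [Module R M] [Module R N] [Module R N']
    (f : M →ₗ[R] N) (g : M →ₗ[R] N') (p : Submodule R M) (h : ∀ m ∈ p, f m = 0 ↔ g m = 0) :
    Module.finrank R (p.map f) = Module.finrank R (p.map g) := by
  have hker : LinearMap.ker (f.domRestrict p) = LinearMap.ker (g.domRestrict p) := by
    ext ⟨m, hm⟩
    simpa using h m hm
  rw [← LinearMap.range_domRestrict, ← LinearMap.range_domRestrict]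
  exact ((f.domRestrict p).quotKerEquivRange.symm ≪≫ₗ Submodule.quotEquivOfEq _ _ hker ≪≫ₗ
    (g.domRestrict p).quotKerEquivRange).finrank_eq

theorem finrank_span_coe_monoidHom {M K : Type*} [Monoid M] [Finite M] [Field K]
    (S : Set (M →* K)) :
    Module.finrank K (Submodule.span K ((⇑) '' S : Set (M → K))) = S.ncard := by
  have hind := linearIndependent_monoidHom M K
  have := hind.finite
  have := Fintype.ofFinite S
  have hS : LinearIndependent K fun χ : S => (χ.1 : M → K) := hind.comp _ Subtype.val_injective
  rw [Set.image_eq_range, finrank_span_eq_card hS, ← Nat.card_eq_fintype_card,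
    Nat.card_coe_set_eq]

theorem eval_smul_of_isHomogeneous {σ R : Type*} [CommSemiring R] {f : MvPolynomial σ R} {d : ℕ}
    (hf : f.IsHomogeneous d) (c : R) (x : σ → R) : eval (c • x) f = c ^ d * eval x f := by
  rw [eval_eq, eval_eq, Finset.mul_sum]
  refine Finset.sum_congr rfl fun s hs => ?_
  have hdeg : ∑ i ∈ s.support, s i = d := hf.degree_eq_sum_deg_support hs |>.symm
  simp only [Pi.smul_apply, smul_eq_mul, mul_pow, Finset.prod_mul_distrib,
    Finset.prod_pow_eq_pow_sum, hdeg]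
  ring

end Characters

section MonomialCharacters

variable {E K : Type*} [Field K]

/-- Evaluation of polynomials at the points of a subgroup of the torus. -/
noncomputable def torusEval (P : Subgroup (E → Kˣ)) : MvPolynomial E K →ₗ[K] (P → K) :=
  LinearMap.funLeft K K (fun p => Units.val ∘ p.1) ∘ₗ evalₗ K E

theorem torusEval_apply (P : Subgroup (E → Kˣ)) (f : MvPolynomial E K) (p : P) :
    torusEval P f p = eval (Units.val ∘ p.1) f := rfl

theorem range_torusEval [Finite E] [Finite K] (P : Subgroup (E → Kˣ)) :
    LinearMap.range (torusEval P) = ⊤ := by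
  have := Fintype.ofFinite K
  have hinj : Function.Injective fun p : P => (Units.val ∘ p.1 : E → K) :=
    Units.val_injective.comp_left.comp Subtype.val_injective
  have heval : LinearMap.range (evalₗ K E) = ⊤ :=
    top_le_iff.1 <| (map_restrict_dom_evalₗ K E).ge.trans LinearMap.map_le_range
  rw [torusEval, LinearMap.range_comp, heval, Submodule.map_top, LinearMap.range_eq_top]
  exact LinearMap.funLeft_surjective_of_injective K K _ hinj

variable [Fintype E]

/-- The character of a subgroup `P` of the torus `(Kˣ)^E` given by the monomial with exponent
vector `a`. Its values are taken in `K`, as in Dedekind's theorem. -/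
def monomialChar (P : Subgroup (E → Kˣ)) (a : E → ℕ) : P →* K where
  toFun p := ∏ e, (p.1 e : K) ^ a e
  map_one' := by simp
  map_mul' p p' := by simp [mul_pow, Finset.prod_mul_distrib]

theorem monomialChar_apply (P : Subgroup (E → Kˣ)) (a : E → ℕ) (p : P) :
    monomialChar P a p = ∏ e, (p.1 e : K) ^ a e := rfl

theorem monomialChar_eq_iff {P : Subgroup (E → Kˣ)} {a b : E → ℕ} :
    monomialChar P a = monomialChar P b ↔ ∀ p ∈ P, ∏ e, p e ^ a e = ∏ e, p e ^ b e := by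
  simp [MonoidHom.ext_iff, monomialChar_apply, Units.ext_iff]

theorem torusEval_monomial (P : Subgroup (E → Kˣ)) (s : E →₀ ℕ) :
    torusEval P (monomial s 1) = monomialChar P s := by
  ext p
  rw [torusEval_apply, eval_monomial, one_mul, Finsupp.prod_fintype _ _ fun _ => pow_zero _,
    monomialChar_apply]
  rfl

theorem map_torusEval_restrictSupport (P : Subgroup (E → Kˣ)) (A : Set (E → ℕ)) :
    (restrictSupport K {s | ⇑s ∈ A}).map (torusEval P) =
      Submodule.span K ((⇑) '' (monomialChar P '' A)) := by
  rw [restrictSupport_eq_span, Submodule.map_span, Set.image_image, Set.image_image]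
  simp only [torusEval_monomial]
  congr 1
  ext f
  exact ⟨fun ⟨s, hs, hf⟩ => ⟨s, hs, hf⟩,
    fun ⟨a, ha, hf⟩ => ⟨Finsupp.equivFunOnFinite.symm a, ha, hf⟩⟩

theorem finrank_map_torusEval_restrictSupport [Finite K] (P : Subgroup (E → Kˣ))
    (A : Set (E → ℕ)) :
    Module.finrank K ((restrictSupport K {s | ⇑s ∈ A}).map (torusEval P)) =
      (monomialChar P '' A).ncard := by
  rw [map_torusEval_restrictSupport, finrank_span_coe_monoidHom]

theorem ncard_range_monomialChar [Finite K] (P : Subgroup (E → Kˣ)) :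
    (Set.range (monomialChar P)).ncard = Nat.card P := by
  have := Fintype.ofFinite P
  have htop : restrictSupport K {s : E →₀ ℕ | ⇑s ∈ Set.univ} = ⊤ := by
    simp [restrictSupport_univ]
  rw [← Set.image_univ, ← finrank_map_torusEval_restrictSupport, htop, Submodule.map_top,
    range_torusEval, finrank_top, Module.finrank_fintype_fun_eq_card, Nat.card_eq_fintype_card]

end MonomialCharacters

section MinDegree

variable {E K : Type*} [Fintype E] [Field K]

/-- The least degree of a monomial that agrees on `P` with the monomial of exponent vector `a`. -/
noncomputable def minDegree (P : Subgroup (E → Kˣ)) (a : E → ℕ) : ℕ :=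
  sInf {d | ∃ b, monomialChar P b = monomialChar P a ∧ ∑ e, b e = d}

/-- The largest degree needed to represent a monomial character of `P`. For infinite `K` it may be
the junk value `0` of an unbounded supremum. -/
noncomputable def maxMinDegree (P : Subgroup (E → Kˣ)) : ℕ :=
  ⨆ a, minDegree P a

variable {P : Subgroup (E → Kˣ)}

theorem minDegree_le {a b : E → ℕ} (h : monomialChar P b = monomialChar P a) :
    minDegree P a ≤ ∑ e, b e :=
  Nat.sInf_le ⟨b, h, rfl⟩

theorem exists_sum_eq_minDegree (P : Subgroup (E → Kˣ)) (a : E → ℕ) :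
    ∃ b, monomialChar P b = monomialChar P a ∧ ∑ e, b e = minDegree P a :=
  Nat.sInf_mem (s := {d | ∃ b, monomialChar P b = monomialChar P a ∧ ∑ e, b e = d})
    ⟨_, a, rfl, rfl⟩

theorem bddAbove_range_minDegree [Finite K] (P : Subgroup (E → Kˣ)) :
    BddAbove (Set.range (minDegree P)) := by
  have : Finite (P →* K) := DFunLike.finite _
  refine ((Set.finite_range fun χ : P →* K =>
    sInf {d | ∃ b, monomialChar P b = χ ∧ ∑ e, b e = d}).subset ?_).bddAbove
  rintro _ ⟨a, rfl⟩
  exact ⟨monomialChar P a, rfl⟩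

theorem minDegree_le_maxMinDegree [Finite K] (P : Subgroup (E → Kˣ)) (a : E → ℕ) :
    minDegree P a ≤ maxMinDegree P :=
  le_ciSup (bddAbove_range_minDegree P) a

theorem exists_minDegree_eq_maxMinDegree [Finite K] (P : Subgroup (E → Kˣ)) :
    ∃ a, minDegree P a = maxMinDegree P :=
  Nat.sSup_mem (Set.range_nonempty _) (bddAbove_range_minDegree P)

end MinDegree

section Chart

theorem exists_lt_modEq_add {n : ℕ} (hn : 0 < n) (m d : ℕ) : ∃ j < n, m ≡ d + j [MOD n] := by
  refine ⟨(m + (n - 1) * d) % n, Nat.mod_lt _ hn, Nat.ModEq.symm ?_⟩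
  calc d + (m + (n - 1) * d) % n
      ≡ d + (m + (n - 1) * d) [MOD n] := (Nat.mod_modEq _ _).add_left d
    _ = m + n * d := by
      rw [add_left_comm, ← one_add_mul, Nat.add_sub_cancel' (Nat.one_le_iff_ne_zero.2 hn.ne')]
    _ ≡ m [MOD n] := by simp [Nat.ModEq]

variable {E K : Type*} [Field K]

/-- The subgroup of the elements of `P` with coordinate `1` at `e₀`. If `P` is the cone over a
projective set, this is the set itself, seen in the affine chart `t_{e₀} = 1`. -/
def affineChart (P : Subgroup (E → Kˣ)) (e₀ : E) : Subgroup (E → Kˣ) :=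
  P ⊓ (Pi.evalMonoidHom _ e₀).ker

theorem mem_affineChart {P : Subgroup (E → Kˣ)} {e₀ : E} {p : E → Kˣ} :
    p ∈ affineChart P e₀ ↔ p ∈ P ∧ p e₀ = 1 := Iff.rfl

theorem injOn_orbit_affineChart (P : Subgroup (E → Kˣ)) (e₀ : E) :
    Set.InjOn (fun p => MulAction.orbit Kˣ (Units.val ∘ p : E → K)) (affineChart P e₀) := by
  intro p hp p' hp' h
  obtain ⟨u, hu⟩ := MulAction.orbit_eq_iff.1 h
  have hup (e : E) : u * p' e = p e := Units.ext (congr_fun hu e)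
  obtain rfl : u = 1 := by
    simpa [(mem_affineChart.1 hp).2, (mem_affineChart.1 hp').2] using hup e₀
  exact funext fun e => by rw [← hup e, one_mul]

variable {P : Subgroup (E → Kˣ)}

theorem inv_smul_mem_affineChart (hP : ∀ u : Kˣ, Function.const E u ∈ P) (e₀ : E) {p : E → Kˣ}
    (hp : p ∈ P) : (p e₀)⁻¹ • p ∈ affineChart P e₀ :=
  mem_affineChart.2 ⟨P.mul_mem (hP _) hp, inv_mul_cancel _⟩

variable [Fintype E]

theorem sum_add_single [DecidableEq E] (a : E → ℕ) (e₀ : E) (m : ℕ) :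
    ∑ e, (a + Pi.single e₀ m : E → ℕ) e = ∑ e, a e + m := by
  simp [Finset.sum_add_distrib]

theorem monomialChar_affineChart_add_single [DecidableEq E] (P : Subgroup (E → Kˣ)) (e₀ : E)
    (a : E → ℕ) (m : ℕ) :
    monomialChar (affineChart P e₀) (a + Pi.single e₀ m) = monomialChar (affineChart P e₀) a := by
  refine monomialChar_eq_iff.2 fun p hp => Finset.prod_congr rfl fun e _ => ?_
  rcases eq_or_ne e e₀ with rfl | he
  · simp [(mem_affineChart.1 hp).2]
  · simp [he]

variable [Fintype K]

theorem sum_modEq_of_monomialChar_eq (hP : ∀ u : Kˣ, Function.const E u ∈ P) {a b : E → ℕ}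
    (h : monomialChar P a = monomialChar P b) :
    ∑ e, a e ≡ ∑ e, b e [MOD Fintype.card K - 1] := by
  classical
  obtain ⟨u, hu⟩ := IsCyclic.exists_generator (α := Kˣ)
  have hord : orderOf u = Fintype.card K - 1 := by
    rw [orderOf_eq_card_of_forall_mem_zpowers hu, Nat.card_eq_fintype_card, Fintype.card_units]
  rw [← hord, ← pow_eq_pow_iff_modEq]
  simpa [Finset.prod_pow_eq_pow_sum] using monomialChar_eq_iff.1 h _ (hP u)

theorem monomialChar_eq_iff_affineChart (hP : ∀ u : Kˣ, Function.const E u ∈ P) (e₀ : E)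
    {a b : E → ℕ} :
    monomialChar P a = monomialChar P b ↔
      monomialChar (affineChart P e₀) a = monomialChar (affineChart P e₀) b ∧
        ∑ e, a e ≡ ∑ e, b e [MOD Fintype.card K - 1] := by
  refine ⟨fun h => ⟨monomialChar_eq_iff.2 fun p hp => monomialChar_eq_iff.1 h p hp.1,
    sum_modEq_of_monomialChar_eq hP h⟩, fun ⟨hchart, hsum⟩ => monomialChar_eq_iff.2 fun p hp => ?_⟩
  have hscale (c : E → ℕ) :
      ∏ e, p e ^ c e = p e₀ ^ (∑ e, c e) * ∏ e, ((p e₀)⁻¹ • p) e ^ c e := by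
    rw [← Finset.prod_pow_eq_pow_sum, ← Finset.prod_mul_distrib]
    simp [← mul_pow]
  have hpow : p e₀ ^ ∑ e, a e = p e₀ ^ ∑ e, b e := by
    classical
    rw [pow_eq_pow_iff_modEq]
    exact hsum.of_dvd (Fintype.card_units K ▸ orderOf_dvd_card)
  rw [hscale, hscale b, hpow, monomialChar_eq_iff.1 hchart _ (inv_smul_mem_affineChart hP e₀ hp)]

theorem forall_exists_sum_eq_iff_maxMinDegree_le (hP : ∀ u : Kˣ, Function.const E u ∈ P) (e₀ : E)
    (d : ℕ) :
    (∀ a, ∃ b, monomialChar (affineChart P e₀) b = monomialChar (affineChart P e₀) a ∧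
      ∑ e, b e = d) ↔ maxMinDegree P ≤ d + (Fintype.card K - 2) := by
  classical
  have hq := Fintype.one_lt_card (α := K)
  constructor
  · intro h
    refine ciSup_le fun a => ?_
    obtain ⟨b, hba, hb⟩ := h a
    obtain ⟨j, hj, hmod⟩ := exists_lt_modEq_add (n := Fintype.card K - 1) (by omega) (∑ e, a e) d
    have hchar : monomialChar P (b + Pi.single e₀ j) = monomialChar P a := by
      rw [monomialChar_eq_iff_affineChart hP e₀, monomialChar_affineChart_add_single,
        sum_add_single, hb]
      exact ⟨hba, hmod.symm⟩
    have hle := minDegree_le hchar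
    rw [sum_add_single, hb] at hle
    omega
  · intro hM a
    obtain ⟨j, -, hmod⟩ := exists_lt_modEq_add (n := Fintype.card K - 1) (by omega) d (∑ e, a e)
    obtain ⟨b, hb, hdeg⟩ := exists_sum_eq_minDegree P (a + Pi.single e₀ j)
    obtain ⟨hchart, hbmod⟩ := (monomialChar_eq_iff_affineChart hP e₀).1 hb
    rw [monomialChar_affineChart_add_single] at hchart
    rw [sum_add_single] at hbmod
    have hle : ∑ e, b e ≤ d := by
      have := minDegree_le_maxMinDegree P (a + Pi.single e₀ j)
      exact (hbmod.trans hmod.symm).le_of_lt_add (by omega)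
    refine ⟨b + Pi.single e₀ (d - ∑ e, b e), ?_, ?_⟩
    · rw [monomialChar_affineChart_add_single, hchart]
    · rw [sum_add_single, Nat.add_sub_cancel' hle]

theorem card_sub_two_le_maxMinDegree (hP : ∀ u : Kˣ, Function.const E u ∈ P) (e₀ : E) :
    Fintype.card K - 2 ≤ maxMinDegree P := by
  classical
  have hq := Fintype.one_lt_card (α := K)
  obtain ⟨b, hb, hdeg⟩ := exists_sum_eq_minDegree P (Pi.single e₀ (Fintype.card K - 2))
  have hmod := sum_modEq_of_monomialChar_eq hP hb
  rw [Fintype.sum_pi_single'] at hmod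
  calc Fintype.card K - 2 ≤ ∑ e, b e := hmod.symm.le_of_lt_add (by omega)
    _ = minDegree P _ := hdeg
    _ ≤ maxMinDegree P := minDegree_le_maxMinDegree P _

end Chart

namespace Multigraph

variable {V E : Type} (K : Type) [Field K]

/-- The affine cone over the projective toric subset parameterized by `G`, without its apex:
the group of the nonzero scalar multiples of the points `G.point K x`. -/
def cone (G : Multigraph V E) : Subgroup (E → Kˣ) where
  carrier := {p | ∃ (u : Kˣ) (x : V → Kˣ), ∀ e, p e = u * (x (G.fst e) * x (G.snd e))}
  one_mem' := ⟨1, 1, by simp⟩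
  mul_mem' := by
    rintro p p' ⟨u, x, hp⟩ ⟨u', x', hp'⟩
    refine ⟨u * u', x * x', fun e => ?_⟩
    simp only [Pi.mul_apply, hp, hp', mul_mul_mul_comm]
  inv_mem' := by
    rintro p ⟨u, x, hp⟩
    refine ⟨u⁻¹, x⁻¹, fun e => ?_⟩
    simp only [Pi.inv_apply, hp, mul_inv]

variable {K} in
theorem mem_cone {G : Multigraph V E} {p : E → Kˣ} :
    p ∈ G.cone K ↔ ∃ (u : Kˣ) (x : V → Kˣ), ∀ e, p e = u * (x (G.fst e) * x (G.snd e)) := Iff.rfl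

theorem const_mem_cone (G : Multigraph V E) (u : Kˣ) : Function.const E u ∈ G.cone K :=
  ⟨u, 1, by simp⟩

variable {K} in
theorem mem_cone_iff_point {G : Multigraph V E} {p : E → Kˣ} :
    p ∈ G.cone K ↔ ∃ (u : Kˣ) (x : V → Kˣ), Units.val ∘ p = u • G.point K x := by
  simp [mem_cone, funext_iff, point, Units.ext_iff, Units.smul_def]

theorem exists_mem_affineChart_cone (G : Multigraph V E) (e₀ : E) (x : V → Kˣ) :
    ∃ p ∈ affineChart (G.cone K) e₀, ∃ u : Kˣ, Units.val ∘ p = u • G.point K x := by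
  have hx : (fun e => x (G.fst e) * x (G.snd e)) ∈ G.cone K := ⟨1, x, by simp⟩
  exact ⟨_, inv_smul_mem_affineChart (G.const_mem_cone K) e₀ hx,
    (x (G.fst e₀) * x (G.snd e₀))⁻¹, by ext e; simp [point, Units.smul_def]⟩

theorem toricSet_eq_image_affineChart (G : Multigraph V E) (e₀ : E) :
    G.toricSet K =
      (fun p => MulAction.orbit Kˣ (Units.val ∘ p : E → K)) '' affineChart (G.cone K) e₀ := by
  ext O
  constructor
  · rintro ⟨x, rfl⟩
    obtain ⟨p, hp, u, hpu⟩ := G.exists_mem_affineChart_cone K e₀ x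
    exact ⟨p, hp, by simp only [hpu, MulAction.orbit_smul]⟩
  · rintro ⟨p, hp, rfl⟩
    obtain ⟨u, x, hpu⟩ := mem_cone_iff_point.1 hp.1
    exact ⟨x, by simp only [hpu, MulAction.orbit_smul]⟩

theorem ncard_toricSet (G : Multigraph V E) (e₀ : E) :
    (G.toricSet K).ncard = Nat.card (affineChart (G.cone K) e₀) := by
  rw [toricSet_eq_image_affineChart K G e₀, (injOn_orbit_affineChart _ e₀).ncard_image]
  rfl

theorem mem_vanishingIdeal_iff_of_isHomogeneous (G : Multigraph V E) {f : MvPolynomial E K} {d : ℕ}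
    (hf : f.IsHomogeneous d) : f ∈ G.vanishingIdeal K ↔ ∀ x, eval (G.point K x) f = 0 := by
  refine ⟨fun h x => ?_, fun h x d' => ?_⟩
  · simpa [homogeneousComponent_of_mem hf] using h x d
  · rw [homogeneousComponent_of_mem hf]
    split_ifs <;> simp [h x]

theorem mem_vanishingIdeal_iff_torusEval_eq_zero (G : Multigraph V E) (e₀ : E)
    {f : MvPolynomial E K} {d : ℕ} (hf : f.IsHomogeneous d) :
    f ∈ G.vanishingIdeal K ↔ torusEval (affineChart (G.cone K) e₀) f = 0 := by
  rw [mem_vanishingIdeal_iff_of_isHomogeneous K G hf]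
  have eval_smul (u : Kˣ) (x : V → Kˣ) :
      eval (u • G.point K x) f = (u : K) ^ d * eval (G.point K x) f :=
    eval_smul_of_isHomogeneous hf _ _
  constructor
  · intro h
    ext ⟨p, hp⟩
    obtain ⟨u, x, hpu⟩ := mem_cone_iff_point.1 hp.1
    rw [torusEval_apply, hpu, eval_smul, h x, mul_zero, Pi.zero_apply]
  · intro h x
    obtain ⟨p, hp, u, hpu⟩ := G.exists_mem_affineChart_cone K e₀ x
    have hzero := congr_fun h ⟨p, hp⟩
    rw [torusEval_apply, hpu, eval_smul] at hzero
    exact (mul_eq_zero.1 hzero).resolve_left (pow_ne_zero _ u.ne_zero)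

variable [Fintype E]

theorem hilbert_eq_ncard [Finite K] (G : Multigraph V E) (e₀ : E) (d : ℕ) :
    G.hilbert K d = (monomialChar (affineChart (G.cone K) e₀) '' {a | ∑ e, a e = d}).ncard := by
  have hsupp : homogeneousSubmodule E K d =
      restrictSupport K {s | ⇑s ∈ {a : E → ℕ | ∑ e, a e = d}} := by
    simp only [homogeneousSubmodule_eq_finsupp_supported, Finsupp.degree_eq_sum]
    rfl
  rw [← finrank_map_torusEval_restrictSupport, ← hsupp, hilbert]
  refine finrank_map_eq_of_apply_eq_zero_iff _ _ _ fun f hf => ?_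
  rw [AlgHom.toLinearMap_apply, Ideal.Quotient.mkₐ_eq_mk, Ideal.Quotient.eq_zero_iff_mem,
    mem_vanishingIdeal_iff_torusEval_eq_zero K G e₀ hf]

variable [Fintype K]

theorem hilbert_eq_ncard_toricSet_iff [Nonempty E] (G : Multigraph V E) (d : ℕ) :
    G.hilbert K d = (G.toricSet K).ncard ↔
      maxMinDegree (G.cone K) ≤ d + (Fintype.card K - 2) := by
  obtain ⟨e₀⟩ := ‹Nonempty E›
  have : Finite (affineChart (G.cone K) e₀ →* K) := DFunLike.finite _
  set χ := monomialChar (affineChart (G.cone K) e₀)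
  calc G.hilbert K d = (G.toricSet K).ncard
      ↔ (χ '' {a | ∑ e, a e = d}).ncard = (Set.range χ).ncard := by
        rw [hilbert_eq_ncard K G e₀, ncard_toricSet K G e₀, ncard_range_monomialChar]
    _ ↔ χ '' {a | ∑ e, a e = d} = Set.range χ :=
        ⟨fun h => Set.eq_of_subset_of_ncard_le (Set.image_subset_range _ _) h.ge (Set.toFinite _),
          congr_arg Set.ncard⟩
    _ ↔ ∀ a, ∃ b, χ b = χ a ∧ ∑ e, b e = d := by
        simp only [Set.Subset.antisymm_iff, Set.image_subset_range, true_and, Set.range_subset_iff,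
          Set.mem_image, Set.mem_ofPred_eq, and_comm]
    _ ↔ maxMinDegree (G.cone K) ≤ d + (Fintype.card K - 2) :=
        forall_exists_sum_eq_iff_maxMinDegree_le (G.const_mem_cone K) e₀ d

theorem reg_add_card_sub_two [Nonempty E] (G : Multigraph V E) :
    G.reg K + (Fintype.card K - 2) = maxMinDegree (G.cone K) := by
  have hle := card_sub_two_le_maxMinDegree (G.const_mem_cone K) (Classical.arbitrary E)
  have hreg : G.reg K = maxMinDegree (G.cone K) - (Fintype.card K - 2) := by
    simp only [reg, hilbert_eq_ncard_toricSet_iff, ← tsub_le_iff_right]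
    exact csInf_Ici
  rw [hreg, Nat.sub_add_cancel hle]

end Multigraph

section Product

variable {E E₁ E₂ : Type*} {f₁ : E₁ → E} {f₂ : E₂ → E}

theorem exists_comp_eq_and_comp_eq {α : Type*} [Nonempty α]
    (hf : Function.Injective (Sum.elim f₁ f₂)) (g₁ : E₁ → α) (g₂ : E₂ → α) :
    ∃ g : E → α, g ∘ f₁ = g₁ ∧ g ∘ f₂ = g₂ := by
  obtain ⟨g, hg⟩ := hf.surjective_comp_right (Sum.elim g₁ g₂)
  exact ⟨g, Sum.elim_eq_iff.1 ((Sum.comp_elim g f₁ f₂).symm.trans hg)⟩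

variable [Fintype E] [Fintype E₁] [Fintype E₂]

@[to_additive]
theorem prod_comp_mul_prod_comp {M : Type*} [CommMonoid M]
    (hf : Function.Bijective (Sum.elim f₁ f₂)) (g : E → M) :
    (∏ e, g (f₁ e)) * ∏ e, g (f₂ e) = ∏ e, g e := by
  rw [← hf.prod_comp g, Fintype.prod_sum_type]
  rfl

variable {K : Type*} [Field K] {P : Subgroup (E → Kˣ)} {P₁ : Subgroup (E₁ → Kˣ)}
  {P₂ : Subgroup (E₂ → Kˣ)}

theorem monomialChar_eq_iff_of_prod (hf : Function.Bijective (Sum.elim f₁ f₂))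
    (hP : ∀ p, p ∈ P ↔ p ∘ f₁ ∈ P₁ ∧ p ∘ f₂ ∈ P₂) {a b : E → ℕ} :
    monomialChar P a = monomialChar P b ↔
      monomialChar P₁ (a ∘ f₁) = monomialChar P₁ (b ∘ f₁) ∧
        monomialChar P₂ (a ∘ f₂) = monomialChar P₂ (b ∘ f₂) := by
  simp only [monomialChar_eq_iff, ← prod_comp_mul_prod_comp hf, Function.comp_apply]
  refine ⟨fun h => ⟨fun p₁ hp₁ => ?_, fun p₂ hp₂ => ?_⟩, fun ⟨h₁, h₂⟩ p hp => ?_⟩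
  · obtain ⟨p, rfl, hp₂⟩ := exists_comp_eq_and_comp_eq hf.injective p₁ 1
    have hp : p ∈ P := (hP p).2 ⟨hp₁, hp₂ ▸ P₂.one_mem⟩
    have hone (e : E₂) : p (f₂ e) = 1 := congr_fun hp₂ e
    simpa [hone] using h p hp
  · obtain ⟨p, hp₁, rfl⟩ := exists_comp_eq_and_comp_eq hf.injective 1 p₂
    have hp : p ∈ P := (hP p).2 ⟨hp₁ ▸ P₁.one_mem, hp₂⟩
    have hone (e : E₁) : p (f₁ e) = 1 := congr_fun hp₁ e
    simpa [hone] using h p hp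
  · exact congr_arg₂ (· * ·) (h₁ _ ((hP p).1 hp).1) (h₂ _ ((hP p).1 hp).2)

theorem minDegree_eq_add_of_prod (hf : Function.Bijective (Sum.elim f₁ f₂))
    (hP : ∀ p, p ∈ P ↔ p ∘ f₁ ∈ P₁ ∧ p ∘ f₂ ∈ P₂) (a : E → ℕ) :
    minDegree P a = minDegree P₁ (a ∘ f₁) + minDegree P₂ (a ∘ f₂) := by
  refine le_antisymm ?_ ?_
  · obtain ⟨b₁, hb₁, hdeg₁⟩ := exists_sum_eq_minDegree P₁ (a ∘ f₁)
    obtain ⟨b₂, hb₂, hdeg₂⟩ := exists_sum_eq_minDegree P₂ (a ∘ f₂)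
    obtain ⟨b, rfl, rfl⟩ := exists_comp_eq_and_comp_eq hf.injective b₁ b₂
    rw [← hdeg₁, ← hdeg₂]
    exact (minDegree_le ((monomialChar_eq_iff_of_prod hf hP).2 ⟨hb₁, hb₂⟩)).trans_eq
      (sum_comp_add_sum_comp hf b).symm
  · obtain ⟨b, hb, hdeg⟩ := exists_sum_eq_minDegree P a
    obtain ⟨hb₁, hb₂⟩ := (monomialChar_eq_iff_of_prod hf hP).1 hb
    rw [← hdeg, ← sum_comp_add_sum_comp hf]
    exact add_le_add (minDegree_le hb₁) (minDegree_le hb₂)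

theorem maxMinDegree_eq_add_of_prod [Finite K] (hf : Function.Bijective (Sum.elim f₁ f₂))
    (hP : ∀ p, p ∈ P ↔ p ∘ f₁ ∈ P₁ ∧ p ∘ f₂ ∈ P₂) :
    maxMinDegree P = maxMinDegree P₁ + maxMinDegree P₂ := by
  refine le_antisymm (ciSup_le fun a => ?_) ?_
  · rw [minDegree_eq_add_of_prod hf hP]
    exact add_le_add (minDegree_le_maxMinDegree P₁ _) (minDegree_le_maxMinDegree P₂ _)
  · obtain ⟨a₁, ha₁⟩ := exists_minDegree_eq_maxMinDegree P₁
    obtain ⟨a₂, ha₂⟩ := exists_minDegree_eq_maxMinDegree P₂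
    obtain ⟨a, rfl, rfl⟩ := exists_comp_eq_and_comp_eq hf.injective a₁ a₂
    rw [← ha₁, ← ha₂, ← minDegree_eq_add_of_prod hf hP]
    exact minDegree_le_maxMinDegree P a

end Product

theorem Multigraph.reg_eq_add_add_of_cone_prod {V V₁ V₂ E E₁ E₂ : Type} [Finite E] [Finite E₁]
    [Finite E₂] [Nonempty E₁] [Nonempty E₂] (K : Type) [Field K] [Fintype K]
    (G : Multigraph V E) (G₁ : Multigraph V₁ E₁) (G₂ : Multigraph V₂ E₂) {f₁ : E₁ → E}
    {f₂ : E₂ → E} (hf : Function.Bijective (Sum.elim f₁ f₂))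
    (hcone : ∀ p, p ∈ G.cone K ↔ p ∘ f₁ ∈ G₁.cone K ∧ p ∘ f₂ ∈ G₂.cone K) :
    G.reg K = G₁.reg K + G₂.reg K + (Fintype.card K - 2) := by
  have : Nonempty E := .map f₁ ‹_›
  have := Fintype.ofFinite E
  have := Fintype.ofFinite E₁
  have := Fintype.ofFinite E₂
  have hreg := G.reg_add_card_sub_two K
  have hreg₁ := G₁.reg_add_card_sub_two K
  have hreg₂ := G₂.reg_add_card_sub_two K
  have hmax := maxMinDegree_eq_add_of_prod hf hcone
  omega

section PathLabeled

variable {A : Type*} [CommGroup A] {m : ℕ} {p : Fin m → A} {u u' s s' t t' : A}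

/-- The vertices `0, …, m` of a path of length `m` can be labelled, with end labels `s` and `t`, so
that the edge label `p j` is `u` times the product of the labels of its endpoints. The values of the
labelling `y` beyond `m` are irrelevant. -/
def PathLabeled (p : Fin m → A) (u s t : A) : Prop :=
  ∃ y : ℕ → A, y 0 = s ∧ y m = t ∧ ∀ j : Fin m, p j = u * (y j * y (j + 1))

theorem PathLabeled.rescale (h : PathLabeled p u s t) (c d : A) :
    PathLabeled p (u / (c * d)) (c * s) ((if Even m then c else d) * t) := by
  obtain ⟨y, rfl, rfl, hp⟩ := h
  refine ⟨fun j => (if Even j then c else d) * y j, by simp, rfl, fun j => ?_⟩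
  have halt : (if Even (j : ℕ) then c else d) * (if Even (j + 1 : ℕ) then c else d) = c * d := by
    by_cases hj : Even (j : ℕ) <;> simp [hj, Nat.even_add_one, mul_comm]
  rw [hp, mul_mul_mul_comm, halt, ← mul_assoc (u / _), div_mul_cancel]

theorem PathLabeled.of_odd (hm : Odd m) (h : PathLabeled p u s t)
    (hust : u * s * t = u' * s' * t') : PathLabeled p u' s' t' := by
  have hu : u / (s' / s * (t' / t)) = u' := by
    rw [div_mul_div_comm, div_div_eq_mul_div, div_eq_iff_eq_mul, ← mul_assoc, ← mul_assoc, hust]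
  simpa [hu, Nat.not_even_iff_odd.2 hm] using h.rescale (s' / s) (t' / t)

theorem PathLabeled.of_even (hm : Even m) (h : PathLabeled p u s t) (hst : s / t = s' / t')
    (u' : A) : PathLabeled p u' s' t' := by
  have ht : s' / s * t = t' := by
    rw [div_mul_eq_mul_div, div_eq_iff_eq_mul, mul_comm t', ← div_eq_div_iff_mul_eq_mul, hst]
  simpa [hm, ht] using h.rescale (s' / s) (u / u' / (s' / s))

end PathLabeled

section ParallelComp

variable {ι : Type} {k : ι → ℕ}

theorem pcVert_self {i : ι} (hi : 0 < k i) : pcVert k i (k i) = Sum.inl true := by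
  simp [pcVert, hi.ne']

theorem pcVert_of_lt {i : ι} {j : ℕ} (h0 : 0 < j) (hj : j < k i) :
    pcVert k i j = Sum.inr ⟨i, ⟨j - 1, by omega⟩⟩ := by
  simp [pcVert, h0.ne', hj]

theorem mem_cone_parallelComp_iff {K : Type} [Field K] (hk : ∀ i, 0 < k i)
    {p : (i : ι) × Fin (k i) → Kˣ} :
    p ∈ (parallelComp k).cone K ↔ ∃ u s t, ∀ i, PathLabeled (fun j => p ⟨i, j⟩) u s t := by
  rw [Multigraph.mem_cone]
  constructor
  · rintro ⟨u, x, hp⟩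
    exact ⟨u, x (.inl false), x (.inl true), fun i =>
      ⟨fun j => x (pcVert k i j), rfl, congr_arg x (pcVert_self (hk i)), fun j => hp ⟨i, j⟩⟩⟩
  · rintro ⟨u, s, t, hp⟩
    choose y hy₀ hyk hyp using hp
    let x : Bool ⊕ ((i : ι) × Fin (k i - 1)) → Kˣ :=
      Sum.elim (Bool.rec s t) fun v => y v.1 (v.2 + 1)
    have hx {i : ι} {j : ℕ} (hj : j ≤ k i) : x (pcVert k i j) = y i j := by
      rcases hj.eq_or_lt with rfl | hlt
      · rw [pcVert_self (hk i), hyk]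
        rfl
      rcases j.eq_zero_or_pos with rfl | hpos
      · exact (hy₀ i).symm
      · rw [pcVert_of_lt hpos hlt]
        exact congr_arg (y i) (Nat.sub_add_cancel hpos)
    exact ⟨u, x, fun ⟨i, j⟩ => (hyp i j).trans
      (congr_arg₂ (fun a b => u * (a * b)) (hx j.2.le) (hx j.2)).symm⟩

/-- The inclusion of the disjoint union of the subfamily of the `β i` with `φ i`. For `β i` the edge
set of the `i`-th path, it identifies the edges of the parallel composition of some of the paths
with edges of the parallel composition of all of them. -/
def sigmaSubtypeIncl (β : ι → Type*) (φ : ι → Prop) (e : (i : Subtype φ) × β i) : (i : ι) × β i :=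
  ⟨e.1, e.2⟩

theorem bijective_sumElim_sigmaSubtypeIncl (β : ι → Type*) {φ ψ : ι → Prop}
    (h : ∀ i, ψ i ↔ ¬φ i) :
    Function.Bijective (Sum.elim (sigmaSubtypeIncl β φ) (sigmaSubtypeIncl β ψ)) := by
  constructor
  · rintro (⟨⟨i, hi⟩, b⟩ | ⟨⟨i, hi⟩, b⟩) (⟨⟨i', hi'⟩, b'⟩ | ⟨⟨i', hi'⟩, b'⟩) heq <;>
      cases heq
    · rfl
    · exact absurd hi ((h i).1 hi')
    · exact absurd hi' ((h i).1 hi)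
    · rfl
  · rintro ⟨i, b⟩
    by_cases hi : φ i
    · exact ⟨.inl ⟨⟨i, hi⟩, b⟩, rfl⟩
    · exact ⟨.inr ⟨⟨i, (h i).2 hi⟩, b⟩, rfl⟩

theorem mem_cone_parallelComp_iff_odd_even {K : Type} [Field K] (hk : ∀ i, 0 < k i)
    (p : (i : ι) × Fin (k i) → Kˣ) :
    p ∈ (parallelComp k).cone K ↔
      p ∘ sigmaSubtypeIncl _ (fun i => Odd (k i)) ∈
          (parallelComp fun i : {i // Odd (k i)} => k i).cone K ∧
        p ∘ sigmaSubtypeIncl _ (fun i => Even (k i)) ∈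
          (parallelComp fun i : {i // Even (k i)} => k i).cone K := by
  rw [mem_cone_parallelComp_iff hk, mem_cone_parallelComp_iff fun i : {i // Odd (k i)} => hk i,
    mem_cone_parallelComp_iff fun i : {i // Even (k i)} => hk i]
  constructor
  · rintro ⟨u, s, t, hp⟩
    exact ⟨⟨u, s, t, fun i => hp i⟩, ⟨u, s, t, fun i => hp i⟩⟩
  · rintro ⟨⟨u₁, s₁, t₁, hp₁⟩, ⟨u₂, s₂, t₂, hp₂⟩⟩
    refine ⟨u₁ * s₁ * t₁ / (s₂ * t₂), s₂, t₂, fun i => ?_⟩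
    rcases (k i).even_or_odd with hi | hi
    · exact (hp₂ ⟨i, hi⟩).of_even hi rfl _
    · exact (hp₁ ⟨i, hi⟩).of_odd hi (by rw [mul_assoc _ s₂, div_mul_cancel])

end ParallelComp

/-- **Theorem 1.2.**  Let `G` be the parallel composition of `r ≥ 2` paths whose lengths
have mixed parities, `H₁` the parallel composition of the paths of odd length and `H₂`
the parallel composition of the paths of even length.  Then
`reg G = reg H₁ + reg H₂ + (q-2)`, where `q = |K|`. -/
theorem reg_parallelComp_mixed_parity
    (K : Type) [Field K] [Fintype K] (r : ℕ) (hr : 2 ≤ r)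
    (k : Fin r → ℕ) (hk : ∀ i, 0 < k i)
    (hodd : ∃ i, Odd (k i)) (heven : ∃ i, Even (k i)) :
    (parallelComp k).reg K =
      (parallelComp fun i : {i : Fin r // Odd (k i)} => k i.1).reg K +
      (parallelComp fun i : {i : Fin r // Even (k i)} => k i.1).reg K +
      (Fintype.card K - 2) := by
  obtain ⟨i₁, hi₁⟩ := hodd
  obtain ⟨i₂, hi₂⟩ := heven
  have : Nonempty ((i : {i // Odd (k i)}) × Fin (k i)) := ⟨⟨i₁, hi₁⟩, ⟨0, hk i₁⟩⟩
  have : Nonempty ((i : {i // Even (k i)}) × Fin (k i)) := ⟨⟨i₂, hi₂⟩, ⟨0, hk i₂⟩⟩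
  exact Multigraph.reg_eq_add_add_of_cone_prod K _ _ _
    (bijective_sumElim_sigmaSubtypeIncl _ fun _ => Nat.not_odd_iff_even.symm)
    (mem_cone_parallelComp_iff_odd_even hk)
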